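/- Let d ≥ 2 be an integer and fix an integer ℓ ≥ 0. Then the linear span of the family {R_{ℓ,k} : k ∈ ℕ} of radial Zernike polynomials is dense in the weighted Lebesgue space L²([0,1], r^{d−1} dr) (the space of complex-valued measurable functions g on [0,1] with ∫₀¹ |g(r)|² r^{d−1} dr < ∞); consequently {R_{ℓ,k}}_{k∈ℕ} is an orthonormal basis of this space. -/

import Mathlib

/-!
Put `a = ℓ + d / 2` and `p(u) = ∏_{i<k} (u + i)`. Up to normalisation, the coefficient of
`r ^ (ℓ + 2 m)` in `R_{ℓ,k}` is `(-1) ^ (k - m) * binom(k, m) * p(a + m) / k!`, so the integral of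
`R_{ℓ,k}` against `r ^ (ℓ + 2 n) r ^ (d - 1)` is a multiple of the `k`-th forward difference at `a`
of `u ↦ p(u) / (u + n)`. Dividing with remainder, `p(u) / (u + n) = Q(u) + p(-n) / (u + n)` with
`deg Q < k`: the difference kills `Q`, and the difference of `1 / (u + n)` is explicit
(`sum_alt_choose_prod_div`). As `p(-n) = 0` for `n < k`, this gives orthogonality, and `n = k`
gives the norm.

For density, the coefficients form a triangular array with nonzero diagonal, so the span of the
`R_{ℓ,k}` consists of all `r ^ ℓ q(r ^ 2)` with `q` a polynomial. The map `g ↦ g / r ^ ℓ` is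
isometric from `L²(r ^ (d - 1) dr)` to `L²(ν)`, `ν = r ^ (2 ℓ + d - 1) dr`, so it suffices that even
polynomials are dense in `L²(ν)`. Continuous functions are dense there, and a continuous `f` is
uniformly close to `q(r ^ 2)` on `[0, 1]` by the Weierstrass theorem applied to `t ↦ f(√t)`.
-/

open Finset MeasureTheory

/-- The radial Zernike polynomial `R_{ℓ,k}` in dimension `d`. -/
noncomputable def zernikeR (d ℓ k : ℕ) (r : ℝ) : ℝ :=
  Real.sqrt (2 * ℓ + 4 * k + d) *
    ∑ s ∈ Finset.range (k + 1),
      (-1 : ℝ) ^ s * (k.choose s : ℝ) * ((k.factorial : ℝ))⁻¹ *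
        (∏ j ∈ Finset.Icc 1 k, ((ℓ : ℝ) + 2 * k - s - j + d / 2)) *
        r ^ (ℓ + 2 * (k - s))

/-! ### Forward differences of rational functions -/

theorem fwdDiff_iter_inv_add (k : ℕ) (n x : ℝ) (hx : 0 < x + n) :
    (fwdDiff (1:ℝ))^[k] (fun u : ℝ => (u + n)⁻¹) x
      = (-1) ^ k * k.factorial / ∏ i ∈ range (k + 1), (x + n + i) := by
  induction k generalizing x with
  | zero => simp
  | succ k ih =>
    rw [Function.iterate_succ_apply', fwdDiff, ih x hx, ih (x + 1) (by linarith)]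
    have hpos : ∀ m : ℕ, 0 < ∏ i ∈ range m, (x + n + 1 + i) := fun m =>
      prod_pos fun i _ => by positivity
    have e1 : ∏ i ∈ range (k + 1), (x + 1 + n + i)
        = (∏ i ∈ range k, (x + n + 1 + i)) * (x + n + 1 + k) := by
      rw [prod_range_succ]
      congr 1
      · exact prod_congr rfl fun i _ => by ring
      · ring
    have e2 : ∀ m : ℕ, ∏ i ∈ range (m + 1), (x + n + i)
        = (∏ i ∈ range m, (x + n + 1 + i)) * (x + n) := by
      intro m
      rw [prod_range_succ']
      congr 1
      · exact prod_congr rfl fun i _ => by push_cast; ring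
      · simp
    rw [e1, e2 k, e2 (k + 1), prod_range_succ, Nat.factorial_succ]
    have h1 := (hpos k).ne'
    have h2 : x + n + 1 + k ≠ 0 := by positivity
    have h3 := hx.ne'
    push_cast
    field_simp
    ring

/-- The left side is the `k`-th forward difference at `x` of `u ↦ (∏_{i<k} (u + i)) / (u + n)`.
Only the remainder of the product modulo `u + n` contributes, since the quotient is a polynomial of
degree less than `k`. -/
theorem sum_alt_choose_prod_div (k n : ℕ) (x : ℝ) (hx : 0 < x) :
    ∑ m ∈ range (k + 1), (-1 : ℝ) ^ (k - m) * (k.choose m : ℝ) *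
        (∏ i ∈ range k, (x + m + i)) / (x + m + n)
      = (-1) ^ k * k.factorial * (∏ i ∈ range k, ((i : ℝ) - n))
          / ∏ i ∈ range (k + 1), (x + n + i) := by
  let P : Polynomial ℝ := ∏ i ∈ range k, (Polynomial.X + Polynomial.C (i : ℝ))
  -- `X - C (-n)` is `X + n`, in the form used by the division lemmas
  let Q : Polynomial ℝ := P /ₘ (Polynomial.X - Polynomial.C (-(n : ℝ)))
  have hPe : ∀ u : ℝ, P.eval u = ∏ i ∈ range k, (u + i) := fun u => by
    simp [P, Polynomial.eval_prod]
  have hPd : P.natDegree = k := by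
    simp only [P]
    rw [Polynomial.natDegree_prod_of_monic _ _ fun i _ => Polynomial.monic_X_add_C _]
    simp only [Polynomial.natDegree_X_add_C, sum_const, card_range, smul_eq_mul, mul_one]
  have hdiv : ∀ u : ℝ, P.eval u = P.eval (-(n : ℝ)) + (u + n) * Q.eval u := fun u => by
    have h := congrArg (Polynomial.eval u)
      (Polynomial.modByMonic_add_div P (Polynomial.X - Polynomial.C (-(n : ℝ))))
    rw [Polynomial.modByMonic_X_sub_C_eq_C_eval] at h
    simp only [Polynomial.eval_add, Polynomial.eval_mul, Polynomial.eval_C, Polynomial.eval_sub,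
      Polynomial.eval_X, sub_neg_eq_add] at h
    exact h.symm
  have hQ : (fwdDiff (1:ℝ))^[k] Q.eval x = 0 := by
    -- for `k = 0` the quotient vanishes, but `natDegree 0 = 0` is not less than `k`
    rcases Nat.eq_zero_or_pos k with rfl | hk
    · have : Q = 0 := by
        simp only [Q]
        rw [Polynomial.divByMonic_eq_zero_iff (Polynomial.monic_X_sub_C _),
          Polynomial.degree_X_sub_C]
        simp [P]
      simp [this]
    · rw [Polynomial.fwdDiff_iter_eq_zero_of_degree_lt]
      · rfl
      · simp only [Q]
        rw [Polynomial.natDegree_divByMonic _ (Polynomial.monic_X_sub_C _), hPd,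
          Polynomial.natDegree_X_sub_C]
        omega
  have h0 : P.eval (-(n : ℝ)) = ∏ i ∈ range k, ((i : ℝ) - n) := by
    rw [hPe]; exact prod_congr rfl fun i _ => by ring
  have hI := fwdDiff_iter_inv_add k n x (by positivity)
  rw [fwdDiff_iter_eq_sum_shift] at hQ hI
  rw [← h0]
  calc _ = ∑ m ∈ range (k + 1),
        (P.eval (-(n : ℝ)) * (((-1 : ℤ) ^ (k - m) * k.choose m) • (x + m • (1 : ℝ) + n)⁻¹)
          + ((-1 : ℤ) ^ (k - m) * k.choose m) • Q.eval (x + m • (1 : ℝ))) := by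
        refine sum_congr rfl fun m _ => ?_
        have hne : x + m + n ≠ 0 := by positivity
        rw [← hPe, hdiv]
        simp only [zsmul_eq_mul, nsmul_eq_mul, mul_one]
        push_cast
        field_simp
    _ = _ := by
        rw [sum_add_distrib, ← mul_sum, hI, hQ]
        ring

/-! ### Moments and orthonormality -/

/-- The coefficient of `r ^ (ℓ + 2 m)` in `zernikeR d ℓ k`, without the square-root normalisation,
where `a = ℓ + d / 2`. -/
noncomputable def zernikeCoeff (a : ℝ) (k m : ℕ) : ℝ :=
  (-1 : ℝ) ^ (k - m) * (k.choose m : ℝ) * ((k.factorial : ℝ))⁻¹ * ∏ i ∈ range k, (a + m + i)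

/-- The defining sum of `zernikeR`, reindexed by `m = k - s` into ascending powers of `r`. -/
theorem zernikeR_eq (d ℓ k : ℕ) (r : ℝ) :
    zernikeR d ℓ k r = Real.sqrt (2 * ℓ + 4 * k + d) *
      ∑ m ∈ range (k + 1), zernikeCoeff (ℓ + d / 2) k m * r ^ (ℓ + 2 * m) := by
  unfold zernikeR
  congr 1
  rw [← sum_range_reflect]
  refine sum_congr rfl fun m hm => ?_
  have hmk : m ≤ k := Nat.lt_succ_iff.mp (mem_range.mp hm)
  have e : k + 1 - 1 - m = k - m := by omega
  have e' : k - (k - m) = m := by omega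
  rw [e, e', zernikeCoeff, Nat.choose_symm hmk]
  congr 2
  rw [← prod_range_reflect, ← Ico_add_one_right_eq_Icc, prod_Ico_eq_prod_range]
  refine prod_congr (by simp) fun i hi => ?_
  have hik : i < k := by simpa using hi
  rw [Nat.cast_sub hmk, Nat.cast_sub (by omega), Nat.cast_sub (by omega)]
  push_cast
  ring

/-- The moments of `R_{ℓ,k}` in closed form; the product `∏_{i<k} (i - n)` makes them vanish for
`n < k`. -/
theorem zernikeR_moment (d ℓ k n : ℕ) (hd : 2 ≤ d) :
    ∫ r in (0:ℝ)..1, zernikeR d ℓ k r * r ^ (ℓ + 2 * n) * r ^ (d - 1)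
      = Real.sqrt (2 * ℓ + 4 * k + d) * ((-1) ^ k * (∏ i ∈ range k, ((i : ℝ) - n))
          / (2 * ∏ i ∈ range (k + 1), ((ℓ + d / 2 : ℝ) + n + i))) := by
  have hd0 : (2 : ℝ) ≤ d := by exact_mod_cast hd
  have ha : (0 : ℝ) < ℓ + d / 2 := by positivity
  have e : ∀ r : ℝ, zernikeR d ℓ k r * r ^ (ℓ + 2 * n) * r ^ (d - 1)
      = ∑ m ∈ range (k + 1), Real.sqrt (2 * ℓ + 4 * k + d) * zernikeCoeff (ℓ + d / 2) k m *
          r ^ (ℓ + 2 * m + (ℓ + 2 * n) + (d - 1)) := fun r => by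
    rw [zernikeR_eq, mul_assoc, mul_assoc, sum_mul, mul_sum]
    exact sum_congr rfl fun m _ => by ring
  simp_rw [e]
  rw [intervalIntegral.integral_finsetSum
    fun m _ => (Continuous.intervalIntegrable (by fun_prop) _ _)]
  simp_rw [intervalIntegral.integral_const_mul, integral_pow, mul_assoc, ← mul_sum]
  congr 1
  have key := sum_alt_choose_prod_div k n (ℓ + d / 2) ha
  have hk : (k.factorial : ℝ) ≠ 0 := by positivity
  calc _ = ((k.factorial : ℝ)⁻¹ / 2) * ∑ m ∈ range (k + 1), (-1 : ℝ) ^ (k - m) *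
        (k.choose m : ℝ) * (∏ i ∈ range k, ((ℓ + d / 2 : ℝ) + m + i)) /
          ((ℓ + d / 2 : ℝ) + m + n) := by
        rw [mul_sum]
        refine sum_congr rfl fun m _ => ?_
        have hne : (ℓ + d / 2 : ℝ) + m + n ≠ 0 := by positivity
        have : ((ℓ + 2 * m + (ℓ + 2 * n) + (d - 1) : ℕ) : ℝ) + 1
            = 2 * ((ℓ + d / 2 : ℝ) + m + n) := by
          rw [Nat.cast_add, Nat.cast_sub (by omega)]
          push_cast
          ring
        rw [this, zernikeCoeff]
        simp only [one_pow, ne_eq, Nat.add_eq_zero_iff, one_ne_zero, and_false, not_false_eq_true,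
          zero_pow, sub_zero]
        field_simp
    _ = _ := by
        rw [key]
        field_simp

theorem zernikeR_moment_eq_zero (d ℓ k n : ℕ) (hd : 2 ≤ d) (hn : n < k) :
    ∫ r in (0:ℝ)..1, zernikeR d ℓ k r * r ^ (ℓ + 2 * n) * r ^ (d - 1) = 0 := by
  rw [zernikeR_moment d ℓ k n hd, prod_eq_zero (mem_range.mpr hn) (sub_self _)]
  simp

theorem continuous_zernikeR (d ℓ k : ℕ) : Continuous (zernikeR d ℓ k) := by
  unfold zernikeR
  fun_prop

theorem integral_zernikeR_mul (d ℓ k k' : ℕ) :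
    ∫ r in (0:ℝ)..1, zernikeR d ℓ k r * zernikeR d ℓ k' r * r ^ (d - 1)
      = Real.sqrt (2 * ℓ + 4 * k' + d) * ∑ m ∈ range (k' + 1), zernikeCoeff (ℓ + d / 2) k' m *
        ∫ r in (0:ℝ)..1, zernikeR d ℓ k r * r ^ (ℓ + 2 * m) * r ^ (d - 1) := by
  have hc := continuous_zernikeR d ℓ k
  simp_rw [← intervalIntegral.integral_const_mul]
  rw [← intervalIntegral.integral_finsetSum
    fun m _ => (Continuous.intervalIntegrable (by fun_prop) _ _),
    ← intervalIntegral.integral_const_mul]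
  congr 1
  ext r
  rw [zernikeR_eq d ℓ k', mul_left_comm, mul_assoc, mul_sum, sum_mul]
  congr 1
  exact sum_congr rfl fun m _ => by ring

theorem zernikeR_orthogonal_of_lt (d ℓ k k' : ℕ) (hd : 2 ≤ d) (h : k' < k) :
    ∫ r in (0:ℝ)..1, zernikeR d ℓ k r * zernikeR d ℓ k' r * r ^ (d - 1) = 0 := by
  rw [integral_zernikeR_mul, sum_eq_zero, mul_zero]
  intro m hm
  rw [zernikeR_moment_eq_zero d ℓ k m hd (by have := mem_range.mp hm; omega), mul_zero]

theorem zernikeR_norm (d ℓ k : ℕ) (hd : 2 ≤ d) :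
    ∫ r in (0:ℝ)..1, zernikeR d ℓ k r * zernikeR d ℓ k r * r ^ (d - 1) = 1 := by
  have hd0 : (2 : ℝ) ≤ d := by exact_mod_cast hd
  have ha : (0 : ℝ) < ℓ + d / 2 := by positivity
  rw [integral_zernikeR_mul, sum_range_succ, sum_eq_zero, zero_add, zernikeR_moment d ℓ k k hd]
  · have hs : Real.sqrt (2 * ℓ + 4 * k + d) * Real.sqrt (2 * ℓ + 4 * k + d)
        = 2 * ((ℓ + d / 2 : ℝ) + k + k) := by
      rw [Real.mul_self_sqrt (by positivity)]; ring
    have hp : (-1 : ℝ) ^ k * (∏ i ∈ range k, ((i : ℝ) - k)) = k.factorial := by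
      have : ∏ i ∈ range k, ((i : ℝ) - k) = (-1) ^ k * k.factorial := by
        rw [← prod_range_reflect, ← prod_range_add_one_eq_factorial, Nat.cast_prod]
        rw [← card_range k, ← prod_const, card_range, ← prod_mul_distrib]
        refine prod_congr rfl fun i hi => ?_
        have := mem_range.mp hi
        rw [Nat.cast_sub (by omega), Nat.cast_sub (by omega)]
        push_cast
        ring
      rw [this, ← mul_assoc, ← mul_pow]
      simp
    have hP : 0 < ∏ i ∈ range k, ((ℓ + d / 2 : ℝ) + k + i) :=
      prod_pos fun i _ => by positivity
    rw [hp, prod_range_succ, zernikeCoeff]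
    simp only [Nat.sub_self, pow_zero, Nat.choose_self, Nat.cast_one, one_mul]
    have hk : (k.factorial : ℝ) ≠ 0 := by positivity
    have hne : (ℓ + d / 2 : ℝ) + k + k ≠ 0 := by positivity
    calc _ = (Real.sqrt (2 * ℓ + 4 * k + d) * Real.sqrt (2 * ℓ + 4 * k + d)) *
          ((k.factorial : ℝ)⁻¹ * (∏ i ∈ range k, ((ℓ + d / 2 : ℝ) + k + i)) *
          (k.factorial / (2 * ((∏ i ∈ range k, ((ℓ + d / 2 : ℝ) + k + i)) *
            ((ℓ + d / 2 : ℝ) + k + k))))) := by ring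
      _ = 1 := by
        rw [hs]
        have h1 := hP.ne'
        set A := ∏ i ∈ range k, ((ℓ + d / 2 : ℝ) + k + i)
        set B := (ℓ + d / 2 : ℝ) + k + k
        field_simp
  · intro m hm
    rw [zernikeR_moment_eq_zero d ℓ k m hd (mem_range.mp hm), mul_zero]

/-! ### The span of the radial Zernike polynomials -/

/-- Triangularity: `r ^ (ℓ + 2 n)` is `R_{ℓ,n}` divided by its leading coefficient, minus lower terms
that are in the span by induction. -/
theorem monomial_mem_span (d ℓ n : ℕ) (hd : 2 ≤ d) :
    (fun r : ℝ => ((r ^ (ℓ + 2 * n) : ℝ) : ℂ)) ∈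
      Submodule.span ℂ (Set.range fun (k : ℕ) (r : ℝ) => (zernikeR d ℓ k r : ℂ)) := by
  induction n using Nat.strong_induction_on with
  | _ n ih =>
    have hd0 : (2 : ℝ) ≤ d := by exact_mod_cast hd
    have ha : (0 : ℝ) < ℓ + d / 2 := by positivity
    set S := Submodule.span ℂ (Set.range fun (k : ℕ) (r : ℝ) => (zernikeR d ℓ k r : ℂ)) with hS
    have hlead : zernikeCoeff (ℓ + d / 2) n n ≠ 0 := by
      have hP : 0 < ∏ i ∈ range n, ((ℓ + d / 2 : ℝ) + n + i) :=
        prod_pos fun i _ => by positivity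
      have hk : (0 : ℝ) < n.factorial := by positivity
      simp only [zernikeCoeff, Nat.sub_self, pow_zero, Nat.choose_self, Nat.cast_one, one_mul]
      positivity
    have hsq : Real.sqrt (2 * ℓ + 4 * n + d) ≠ 0 := by positivity
    have e : (fun r : ℝ => ((r ^ (ℓ + 2 * n) : ℝ) : ℂ))
        = ((zernikeCoeff (ℓ + d / 2) n n)⁻¹ : ℂ) •
          (((Real.sqrt (2 * ℓ + 4 * n + d))⁻¹ : ℂ) • (fun r : ℝ => (zernikeR d ℓ n r : ℂ))
            - ∑ m ∈ range n, (zernikeCoeff (ℓ + d / 2) n m : ℂ) •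
              (fun r : ℝ => ((r ^ (ℓ + 2 * m) : ℝ) : ℂ))) := by
      ext r
      have h := zernikeR_eq d ℓ n r
      rw [sum_range_succ] at h
      simp only [Pi.smul_apply, Pi.sub_apply, Finset.sum_apply, smul_eq_mul]
      rw [h]
      have h1 : (zernikeCoeff (ℓ + d / 2) n n : ℂ) ≠ 0 := by exact_mod_cast hlead
      have h2 : (Real.sqrt (2 * ℓ + 4 * n + d) : ℂ) ≠ 0 := by exact_mod_cast hsq
      push_cast
      rw [inv_mul_cancel_left₀ h2, add_sub_cancel_left, inv_mul_cancel_left₀ h1]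
    rw [e]
    refine S.smul_mem _ (S.sub_mem (S.smul_mem _ (Submodule.subset_span ⟨n, rfl⟩)) ?_)
    exact S.sum_mem fun m hm => S.smul_mem _ (ih m (mem_range.mp hm))

theorem exists_sum_zernikeR_eq (d ℓ : ℕ) (hd : 2 ≤ d) (q : Polynomial ℂ) :
    ∃ (N : ℕ) (c : ℕ → ℂ), ∀ r : ℝ,
      ∑ k ∈ range N, c k * (zernikeR d ℓ k r : ℂ) = (r : ℂ) ^ ℓ * q.eval ((r : ℂ) ^ 2) := by
  have hmem : (fun r : ℝ => (r : ℂ) ^ ℓ * q.eval ((r : ℂ) ^ 2)) ∈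
      Submodule.span ℂ (Set.range fun (k : ℕ) (r : ℝ) => (zernikeR d ℓ k r : ℂ)) := by
    have e : (fun r : ℝ => (r : ℂ) ^ ℓ * q.eval ((r : ℂ) ^ 2))
        = ∑ n ∈ range (q.natDegree + 1),
            q.coeff n • (fun r : ℝ => ((r ^ (ℓ + 2 * n) : ℝ) : ℂ)) := by
      ext r
      simp only [Finset.sum_apply, Pi.smul_apply, smul_eq_mul]
      rw [Polynomial.eval_eq_sum_range, mul_sum]
      exact sum_congr rfl fun n _ => by push_cast; ring
    rw [e]
    exact Submodule.sum_mem _ fun n _ => Submodule.smul_mem _ _ (monomial_mem_span d ℓ n hd)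
  obtain ⟨c, hc⟩ := Finsupp.mem_span_range_iff_exists_finsupp.mp hmem
  refine ⟨c.support.sup id + 1, c, fun r => ?_⟩
  rw [Finsupp.sum_of_support_subset c (s := range (c.support.sup id + 1))
    (fun i hi => mem_range.mpr (Nat.lt_succ_of_le (le_sup (f := id) hi))) _ (by simp)] at hc
  have := congrFun hc r
  simpa only [Finset.sum_apply, Pi.smul_apply, smul_eq_mul] using this

/-! ### Density -/

/-- Weierstrass approximation by even polynomials, via the substitution `t = r ^ 2`. -/
theorem exists_complex_polynomial_near (f : ℝ → ℂ) (hf : Continuous f) (δ : ℝ) (hδ : 0 < δ) :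
    ∃ q : Polynomial ℂ, ∀ r ∈ Set.Icc (0:ℝ) 1, ‖f r - q.eval ((r : ℂ) ^ 2)‖ ≤ δ := by
  obtain ⟨p₁, h₁⟩ := exists_polynomial_near_of_continuousOn 0 1 (fun t => (f (Real.sqrt t)).re)
    (by fun_prop) (δ / 2) (by positivity)
  obtain ⟨p₂, h₂⟩ := exists_polynomial_near_of_continuousOn 0 1 (fun t => (f (Real.sqrt t)).im)
    (by fun_prop) (δ / 2) (by positivity)
  refine ⟨p₁.map (algebraMap ℝ ℂ) + Polynomial.C Complex.I * p₂.map (algebraMap ℝ ℂ),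
    fun r hr => ?_⟩
  have hr2 : r ^ 2 ∈ Set.Icc (0:ℝ) 1 := ⟨by positivity, pow_le_one₀ hr.1 hr.2⟩
  have a₁ := h₁ _ hr2
  have a₂ := h₂ _ hr2
  simp only [Real.sqrt_sq hr.1] at a₁ a₂
  have ev : ∀ p : Polynomial ℝ, (p.map (algebraMap ℝ ℂ)).eval ((r : ℂ) ^ 2)
      = ((p.eval (r ^ 2) : ℝ) : ℂ) := fun p => by
    have : ((r : ℂ) ^ 2) = algebraMap ℝ ℂ (r ^ 2) := by simp
    rw [this, Polynomial.eval_map_algebraMap, Polynomial.aeval_algebraMap_apply]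
    simp
  rw [Polynomial.eval_add, Polynomial.eval_mul, Polynomial.eval_C, ev, ev]
  refine (Complex.norm_le_abs_re_add_abs_im _).trans ?_
  simp only [Complex.sub_re, Complex.add_re, Complex.ofReal_re, Complex.mul_re, Complex.I_re,
    Complex.I_im, Complex.ofReal_im, Complex.sub_im, Complex.add_im, Complex.mul_im]
  rw [abs_sub_comm] at a₁ a₂
  ring_nf at a₁ a₂ ⊢
  linarith

/-- Even polynomials are dense in `L²(ν)` for a finite measure `ν` carried by `[0,1]`. -/
theorem exists_even_polynomial_integral_lt (ν : Measure ℝ) [IsFiniteMeasure ν]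
    (hν : ∀ᵐ r ∂ν, r ∈ Set.Icc (0:ℝ) 1) (h : ℝ → ℂ) (hh : MemLp h 2 ν) (ε : ℝ) (hε : 0 < ε) :
    ∃ q : Polynomial ℂ, ∫ r, ‖h r - q.eval ((r : ℂ) ^ 2)‖ ^ 2 ∂ν < ε := by
  obtain ⟨f, hf, hfm⟩ := MemLp.exists_boundedContinuous_integral_rpow_sub_le (μ := ν) (p := 2)
    (by norm_num) (f := h) (by simpa using hh) (ε := ε / 8) (by positivity)
  have hfm2 : MemLp f 2 ν := by simpa using hfm
  set M := ν.real Set.univ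
  have hM : 0 ≤ M := measureReal_nonneg
  obtain ⟨q, hq⟩ := exists_complex_polynomial_near f f.continuous
    (Real.sqrt (ε / (8 * (M + 1)))) (by positivity)
  refine ⟨q, ?_⟩
  have i1 : Integrable (fun r => 2 * ‖h r - f r‖ ^ 2) ν :=
    ((hh.sub hfm2).integrable_norm_pow (by norm_num)).const_mul 2
  have i2 : Integrable (fun _ : ℝ => 2 * (ε / (8 * (M + 1)))) ν := integrable_const _
  have hle : ∫ r, ‖h r - q.eval ((r : ℂ) ^ 2)‖ ^ 2 ∂ν
      ≤ ∫ r, (2 * ‖h r - f r‖ ^ 2 + 2 * (ε / (8 * (M + 1)))) ∂ν := by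
    refine integral_mono_of_nonneg (ae_of_all _ fun r => by positivity) (i1.add i2) ?_
    filter_upwards [hν] with r hr
    have b1 := pow_le_pow_left₀ (norm_nonneg _) (hq r hr) 2
    rw [Real.sq_sqrt (by positivity)] at b1
    have b2 := pow_le_pow_left₀ (norm_nonneg _)
      (norm_add_le (h r - f r) (f r - q.eval ((r : ℂ) ^ 2))) 2
    rw [sub_add_sub_cancel] at b2
    nlinarith [sq_nonneg (‖h r - f r‖ - ‖f r - q.eval ((r : ℂ) ^ 2)‖)]
  rw [integral_add i1 i2, integral_const_mul, integral_const, smul_eq_mul] at hle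
  have hf' : ∫ r, ‖h r - f r‖ ^ 2 ∂ν ≤ ε / 8 := by
    simpa only [Real.rpow_two] using hf
  have hb : M * (2 * (ε / (8 * (M + 1)))) ≤ ε / 4 := by
    have : M / (M + 1) ≤ 1 := by rw [div_le_one (by positivity)]; linarith
    calc M * (2 * (ε / (8 * (M + 1)))) = (M / (M + 1)) * (ε / 4) := by field_simp; ring
      _ ≤ 1 * (ε / 4) := by gcongr
      _ = ε / 4 := one_mul _
  change _ ≤ _ + M * _ at hle
  linarith

theorem zernikeR_dense (d ℓ : ℕ) (hd : 2 ≤ d) (g : ℝ → ℂ) (hg : Measurable g)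
    (hfin : ∫⁻ r in Set.Ioc (0:ℝ) 1, ENNReal.ofReal (‖g r‖ ^ 2 * r ^ (d - 1)) < ⊤)
    (ε : ℝ) (hε : 0 < ε) :
    ∃ (N : ℕ) (c : ℕ → ℂ), ∫ r in (0:ℝ)..1,
      ‖g r - ∑ k ∈ Finset.range N, c k * (zernikeR d ℓ k r : ℂ)‖ ^ 2 * r ^ (d - 1) < ε := by
  -- `g` is replaced by `h = g / r ^ ℓ`, and the lost factor `r ^ (2 ℓ)` goes into the weight `w`
  let w : ℝ → ENNReal := fun r => ENNReal.ofReal (r ^ (2 * ℓ + (d - 1)))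
  have hw : Measurable w := by fun_prop
  let ν : Measure ℝ := (volume.restrict (Set.Ioc (0:ℝ) 1)).withDensity w
  have hwle : ∀ r ∈ Set.Ioc (0:ℝ) 1, w r ≤ 1 := fun r hr => by
    simp only [w]
    rw [ENNReal.ofReal_le_one]
    exact pow_le_one₀ hr.1.le hr.2
  have hνfin : IsFiniteMeasure ν := by
    refine isFiniteMeasure_withDensity (ne_of_lt ?_)
    calc ∫⁻ r in Set.Ioc (0:ℝ) 1, w r ≤ ∫⁻ _ in Set.Ioc (0:ℝ) 1, 1 :=
          setLIntegral_mono measurable_const hwle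
      _ < ⊤ := by simp
  have hsupp : ∀ᵐ r ∂ν, r ∈ Set.Icc (0:ℝ) 1 := by
    refine (withDensity_absolutelyContinuous _ w).ae_le ?_
    filter_upwards [ae_restrict_mem measurableSet_Ioc] with r hr
    exact Set.Ioc_subset_Icc_self hr
  let h : ℝ → ℂ := fun r => g r / (r : ℂ) ^ ℓ
  have hhm : Measurable h := hg.div (by fun_prop)
  have hh : MemLp h 2 ν := by
    refine ⟨hhm.aestronglyMeasurable, ?_⟩
    rw [eLpNorm_lt_top_iff_lintegral_rpow_enorm_lt_top (by norm_num) (by norm_num)]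
    rw [lintegral_withDensity_eq_lintegral_mul _ hw (by fun_prop)]
    refine lt_of_eq_of_lt (setLIntegral_congr_fun measurableSet_Ioc fun r hr => ?_) hfin
    have hr0 : 0 < r := hr.1
    simp only [Pi.mul_apply, w, h, ENNReal.toReal_ofNat, ENNReal.rpow_ofNat]
    rw [← ofReal_norm, ← ENNReal.ofReal_pow (norm_nonneg _),
      ← ENNReal.ofReal_mul (by positivity)]
    congr 1
    rw [norm_div, norm_pow, Complex.norm_real, Real.norm_of_nonneg hr0.le]
    field_simp
    ring
  obtain ⟨q, hq⟩ := exists_even_polynomial_integral_lt ν hsupp h hh ε hε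
  obtain ⟨N, c, hc⟩ := exists_sum_zernikeR_eq d ℓ hd q
  refine ⟨N, c, lt_of_eq_of_lt ?_ hq⟩
  rw [intervalIntegral.integral_of_le zero_le_one,
    integral_withDensity_eq_integral_toReal_smul hw (ae_of_all _ fun r => ENNReal.ofReal_lt_top)]
  refine setIntegral_congr_fun measurableSet_Ioc fun r hr => ?_
  have hr0 : 0 < r := hr.1
  have hrc : (r : ℂ) ^ ℓ ≠ 0 := pow_ne_zero _ (by exact_mod_cast hr0.ne')
  have e : g r - (r : ℂ) ^ ℓ * q.eval ((r : ℂ) ^ 2)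
      = (r : ℂ) ^ ℓ * (h r - q.eval ((r : ℂ) ^ 2)) := by
    simp only [h]
    field_simp
  simp only [w]
  rw [hc r, e, ENNReal.toReal_ofReal (by positivity), norm_mul, norm_pow, Complex.norm_real,
    Real.norm_of_nonneg hr0.le, smul_eq_mul]
  ring

/-- For fixed `d ≥ 2` and `ℓ ≥ 0`, the linear span of the radial Zernike
polynomials `{R_{ℓ,k}}_{k∈ℕ}` is dense in the weighted space `L²([0,1], r^{d-1} dr)` of
complex-valued square-integrable functions: every function `g` with
`∫₀¹ |g(r)|² r^{d-1} dr < ∞` can be approximated arbitrarily well in the weighted `L²`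
norm by finite linear combinations.  Together with orthonormality, `{R_{ℓ,k}}_{k∈ℕ}` is
therefore an orthonormal basis of `L²([0,1], r^{d-1} dr)`. -/
theorem zernikeR_span_dense (d ℓ : ℕ) (hd : 2 ≤ d) :
    (∀ k k' : ℕ,
      ∫ r in (0:ℝ)..1, zernikeR d ℓ k r * zernikeR d ℓ k' r * r ^ (d - 1)
        = if k = k' then 1 else 0) ∧
    (∀ g : ℝ → ℂ, Measurable g →
      (∫⁻ r in Set.Ioc (0:ℝ) 1, ENNReal.ofReal (‖g r‖ ^ 2 * r ^ (d - 1)) < ⊤) →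
      ∀ ε > 0, ∃ (N : ℕ) (c : ℕ → ℂ),
        ∫ r in (0:ℝ)..1,
            ‖g r - ∑ k ∈ Finset.range N, c k * (zernikeR d ℓ k r : ℂ)‖ ^ 2 * r ^ (d - 1)
          < ε) := by
  refine ⟨fun k k' => ?_, fun g hg hfin ε hε => zernikeR_dense d ℓ hd g hg hfin ε hε⟩
  rcases lt_trichotomy k k' with h | rfl | h
  · simp_rw [mul_comm (zernikeR d ℓ k _)]
    rw [if_neg h.ne, zernikeR_orthogonal_of_lt d ℓ k' k hd h]
  · rw [if_pos rfl, zernikeR_norm d ℓ k hd]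
  · rw [if_neg h.ne', zernikeR_orthogonal_of_lt d ℓ k k' hd h]
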